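/- For every n ≥ 1, the number of spanning trees of the complete graph K_n equals n^{n−2} (with the convention that for n = 1 and n = 2 this number is 1). -/

import Mathlib

namespace Cayley

variable {α : Type}

/-- `a` reaches the root `none` by iterating `f`. -/
inductive Reach (f : α → Option α) : α → Prop
  | root (a : α) (h : f a = none) : Reach f a
  | step (a b : α) (h : f a = some b) (hb : Reach f b) : Reach f a

/-- The graph of a parent function. -/
def gr (f : α → Option α) : SimpleGraph (Option α) :=
  SimpleGraph.fromRel (fun x y => ∃ a, x = some a ∧ f a = y)

theorem Reach.no_two {f : α → Option α} {a : α} (h : Reach f a) :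
    ∀ b, f a = some b → f b = some a → False := by
  induction h with
  | root a h => intro b hb; simp [h] at hb
  | step a b h hb ih =>
    intro c hc hca
    rw [h] at hc
    cases hc
    exact ih a hca h

theorem Reach.ne_self {f : α → Option α} {a : α} (h : Reach f a) : f a ≠ some a :=
  fun h' => h.no_two a h' h'

theorem gr_adj {f : α → Option α} {a : α} (h : Reach f a) : (gr f).Adj (some a) (f a) := by
  rw [gr, SimpleGraph.fromRel_adj]
  exact ⟨fun h' => h.ne_self h'.symm, Or.inl ⟨a, rfl, rfl⟩⟩

theorem gr_connected {f : α → Option α} (h : ∀ a, Reach f a) : (gr f).Connected := by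
  have key : ∀ a, (gr f).Reachable (some a) none := by
    intro a
    induction h a with
    | root a h' => rw [← h']; exact (gr_adj (h a)).reachable
    | step a b h' hb ih =>
      have := (gr_adj (h a)).reachable
      rw [h'] at this
      exact this.trans ih
  have key' : ∀ x, (gr f).Reachable x none := by
    rintro (_ | a)
    · exact SimpleGraph.Reachable.refl _
    · exact key a
  exact ⟨fun x y => (key' x).trans (key' y).symm⟩

theorem gr_isTree [Finite α] {f : α → Option α} (h : ∀ a, Reach f a) : (gr f).IsTree := by
  have hc := gr_connected h
  rw [SimpleGraph.isTree_iff_connected_and_card]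
  refine ⟨hc, le_antisymm ?_ hc.card_vert_le_card_edgeSet_add_one⟩
  rw [Finite.card_option]
  refine Nat.add_le_add_right ?_ 1
  have hsub : (gr f).edgeSet ⊆ Set.range (fun a : α => s(some a, f a)) := by
    intro e
    induction e using Sym2.ind with
    | _ x y =>
      rw [SimpleGraph.mem_edgeSet, gr, SimpleGraph.fromRel_adj]
      rintro ⟨-, ⟨a, rfl, rfl⟩ | ⟨a, rfl, rfl⟩⟩
      · exact ⟨a, rfl⟩
      · exact ⟨a, Sym2.eq_swap⟩
  calc Nat.card (gr f).edgeSet ≤ Nat.card (Set.range (fun a : α => s(some a, f a))) :=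
        Nat.card_mono (Set.finite_range _) hsub
    _ ≤ Nat.card α := Finite.card_range_le _

theorem gr_inj {f g : α → Option α} (hf : ∀ a, Reach f a)
    (h : gr f = gr g) : f = g := by
  have key : ∀ a, f a = g a := by
    intro a
    induction hf a with
    | root a h' =>
      have := gr_adj (hf a)
      rw [h, gr, SimpleGraph.fromRel_adj] at this
      obtain ⟨-, ⟨b, hb, hb'⟩ | ⟨b, hb, hb'⟩⟩ := this
      · cases hb; exact hb'.symm
      · rw [h'] at hb; cases hb
    | step a b h' hb ih =>
      have := gr_adj (hf a)
      rw [h, gr, SimpleGraph.fromRel_adj] at this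
      obtain ⟨-, ⟨c, hc, hc'⟩ | ⟨c, hc, hc'⟩⟩ := this
      · cases hc; exact hc'.symm
      · rw [h'] at hc; cases hc
        exact ((hf a).no_two b h' (ih.trans hc')).elim
  exact funext key

theorem gr_surj {T : SimpleGraph (Option α)} (hT : T.IsTree) :
    ∃ f : α → Option α, (∀ a, Reach f a) ∧ gr f = T := by
  have hex : ∀ a : α, ∃ y, T.Adj (some a) y ∧ T.dist y none < T.dist (some a) none := by
    intro a
    obtain ⟨p, hp⟩ := hT.connected.exists_walk_length_eq_dist (some a) none
    cases p with
    | cons hadj q =>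
      refine ⟨_, hadj, ?_⟩
      have := SimpleGraph.dist_le q
      rw [SimpleGraph.Walk.length_cons] at hp
      omega
  choose f hadj hlt using hex
  have hr : ∀ k a, T.dist (some a) none < k → Reach f a := by
    intro k
    induction k with
    | zero => intro a h; omega
    | succ k ih =>
      intro a h
      cases hfa : f a with
      | none => exact Reach.root a hfa
      | some b =>
        refine Reach.step a b hfa (ih b ?_)
        have := hlt a
        rw [hfa] at this
        omega
  have hr' : ∀ a, Reach f a := fun a => hr _ a (Nat.lt_succ_self _)
  refine ⟨f, hr', ?_⟩
  have hle : gr f ≤ T := by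
    intro x y hxy
    rw [gr, SimpleGraph.fromRel_adj] at hxy
    obtain ⟨-, ⟨a, rfl, rfl⟩ | ⟨a, rfl, rfl⟩⟩ := hxy
    · exact hadj a
    · exact (hadj a).symm
  exact le_antisymm hle
    ((SimpleGraph.isTree_iff_minimal_connected.1 hT).2 (gr_connected hr') hle)

theorem card_trees [Finite α] : Nat.card {T : SimpleGraph (Option α) // T.IsTree} =
    Nat.card {f : α → Option α // ∀ a, Reach f a} := by
  symm
  refine Nat.card_congr (Equiv.ofBijective (fun f => ⟨gr f.1, gr_isTree f.2⟩) ⟨?_, ?_⟩)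
  · intro f g h
    exact Subtype.ext (gr_inj f.2 (congrArg Subtype.val h))
  · rintro ⟨T, hT⟩
    obtain ⟨f, hf, h⟩ := gr_surj hT
    exact ⟨⟨f, hf⟩, Subtype.ext h⟩

variable [Fintype α] [DecidableEq α]

/-- The adjacency matrix of a parent function. -/
def mat (f : α → Option α) : Matrix α α ℚ :=
  Matrix.of fun a b => if f a = some b then 1 else 0

theorem mat_mul_apply (f : α → Option α) (M : Matrix α α ℚ) (a c : α) :
    (mat f * M) a c = (f a).elim 0 (fun b => M b c) := by
  rw [Matrix.mul_apply]
  cases h : f a with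
  | none => simp [mat, h]
  | some b => simp [mat, h]

theorem mat_nilpotent {f : α → Option α} (h : ∀ a, Reach f a) : IsNilpotent (mat f) := by
  have key : ∀ a, ∃ k, ∀ j, k ≤ j → ∀ c, (mat f ^ j) a c = 0 := by
    intro a
    induction h a with
    | root a h' =>
      refine ⟨1, fun j hj c => ?_⟩
      obtain ⟨i, rfl⟩ := Nat.exists_eq_add_of_le' hj
      rw [pow_succ', mat_mul_apply, h']
      rfl
    | step a b h' hb ih =>
      obtain ⟨k, hk⟩ := ih
      refine ⟨k + 1, fun j hj c => ?_⟩
      obtain ⟨i, rfl⟩ := Nat.exists_eq_add_of_le' (le_trans (Nat.le_add_left 1 k) hj)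
      rw [pow_succ', mat_mul_apply, h']
      exact hk i (by omega) c
  choose k hk using key
  refine ⟨∑ a, k a, ?_⟩
  ext a c
  exact hk a _ (Finset.single_le_sum (f := k) (fun _ _ => Nat.zero_le _) (Finset.mem_univ a)) c

theorem det_of_reach {f : α → Option α} (h : ∀ a, Reach f a) : (1 - mat f).det = 1 := by
  have h1 := Matrix.isNilpotent_charpoly_sub_pow_of_isNilpotent (mat_nilpotent h)
  have h2 := sub_eq_zero.1 h1.eq_zero
  have h3 := Matrix.eval_charpoly (mat f) 1
  rw [h2] at h3
  simpa using h3.symm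

theorem det_of_not_reach {f : α → Option α} (h : ¬ ∀ a, Reach f a) : (1 - mat f).det = 0 := by
  classical
  push Not at h
  obtain ⟨a, ha⟩ := h
  rw [← Matrix.exists_mulVec_eq_zero_iff]
  refine ⟨fun x => if Reach f x then 0 else 1, fun h0 => ?_, ?_⟩
  · have := congrFun h0 a
    simp [ha] at this
  · ext x
    rw [Matrix.sub_mulVec, Matrix.one_mulVec]
    cases hx : f x with
    | none => simp [Matrix.mulVec, dotProduct, mat, hx, Reach.root x hx]
    | some b =>
      have : Reach f x ↔ Reach f b := by
        constructor
        · intro h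
          cases h with
          | root _ h => simp [hx] at h
          | step _ c h hc => rw [hx] at h; cases h; exact hc
        · exact Reach.step x b hx
      simp only [Matrix.mulVec, dotProduct, mat, Matrix.of_apply, hx, Option.some.injEq, ite_mul,
        one_mul, zero_mul, Finset.sum_ite_eq, Finset.mem_univ, if_true, Pi.sub_apply, this,
        sub_self, Pi.zero_apply]

theorem card_eq_det : (Nat.card {f : α → Option α // ∀ a, Reach f a} : ℚ) =
    (∑ f : α → Option α, (1 - mat f).det) := by
  classical
  rw [Nat.card_eq_fintype_card, Fintype.card_subtype, Finset.card_filter]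
  push_cast
  refine Finset.sum_congr rfl fun f _ => ?_
  split_ifs with h
  · exact (det_of_reach h).symm
  · exact (det_of_not_reach h).symm

theorem sum_det : (∑ f : α → Option α, (1 - mat f).det) =
    (Matrix.of fun a b : α => ((Fintype.card α : ℚ) + 1) * (1 : Matrix α α ℚ) a b - 1).det := by
  have := (Matrix.detRowAlternating (R := ℚ) (n := α)).toMultilinearMap.map_sum
    (α := fun _ => Option α)
    (fun (a : α) (y : Option α) (b : α) =>
      (1 : Matrix α α ℚ) a b - if y = some b then 1 else 0)
  refine Eq.trans ?_ (this.symm.trans ?_)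
  · rfl
  · change Matrix.det _ = _
    congr 1
    ext a b
    simp [Finset.sum_apply]

theorem det_eval :
    (Matrix.of fun a b : α => ((Fintype.card α : ℚ) + 1) * (1 : Matrix α α ℚ) a b - 1).det
      * ((Fintype.card α : ℚ) + 1) = ((Fintype.card α : ℚ) + 1) ^ Fintype.card α := by
  have hne : ((Fintype.card α : ℚ) + 1) ≠ 0 := by positivity
  have : (Matrix.of fun a b : α => ((Fintype.card α : ℚ) + 1) * (1 : Matrix α α ℚ) a b - 1) =
      ((Fintype.card α : ℚ) + 1) • (1 + Matrix.replicateCol Unit (fun _ : α => (1 : ℚ)) *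
        Matrix.replicateRow Unit (fun _ : α => -((Fintype.card α : ℚ) + 1)⁻¹)) := by
    ext a b
    simp [Matrix.mul_apply, mul_add, hne]
    ring
  rw [this, Matrix.det_smul, Matrix.det_one_add_replicateCol_mul_replicateRow]
  simp [dotProduct]
  field_simp
  ring

theorem card_option_trees : Nat.card {T : SimpleGraph (Option α) // T.IsTree} *
    (Fintype.card α + 1) = (Fintype.card α + 1) ^ Fintype.card α := by
  have := det_eval (α := α)
  rw [← sum_det, ← card_eq_det, ← card_trees] at this
  exact_mod_cast this

end Cayley

/-- Cayley's formula: for every `n ≥ 1`, the number of spanning trees of the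
complete graph `K_n` equals `n ^ (n − 2)` (for `n = 1, 2` this number is `1`, which agrees
with truncated subtraction on `ℕ`). -/
theorem card_spanning_trees_complete_graph (n : ℕ) (hn : 1 ≤ n) :
    Nat.card {T : SimpleGraph (Fin n) // T.IsTree} = n ^ (n - 2) := by
  obtain ⟨m, rfl⟩ := Nat.exists_eq_add_of_le' hn
  have e : Fin (m + 1) ≃ Option (Fin m) := finSuccEquiv m
  have h1 : Nat.card {T : SimpleGraph (Fin (m + 1)) // T.IsTree} =
      Nat.card {T : SimpleGraph (Option (Fin m)) // T.IsTree} :=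
    Nat.card_congr (e.simpleGraph.subtypeEquiv fun T =>
      (SimpleGraph.Iso.comap e.symm T).symm.isTree_iff)
  have h2 := Cayley.card_option_trees (α := Fin m)
  rw [← h1, Fintype.card_fin] at h2
  refine Nat.eq_of_mul_eq_mul_right (Nat.succ_pos m) (h2.trans ?_)
  cases m with
  | zero => rfl
  | succ k => rw [← pow_succ]; rfl
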